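/- arXiv:1810.01390 — 3 statements merged into one kernel-verified Lean document; each statement's English description precedes it below -/
import Mathlib

section
/- Let I be an open interval with 0 ∈ I, let a ∈ ℝ, b > 0 and q > 1, and set γ = (bq)^{−1/(q−1)} and f(r) = a − r + b r^q for r ≥ 0. Let G : I → ℝ be a nonnegative continuous function such that f(G(t)) ≥ 0 for all t ∈ I, and assume a < (1 − 1/q)γ. If G(0) < γ, then G(t) < γ for all t ∈ I. -/
open MeasureTheory Real
open scoped RealInnerProductSpace

noncomputable section

abbrev Rn (n : ℕ) := EuclideanSpace ℝ (Fin n)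

/-- Membership in `H¹(ℝⁿ)` for a real-valued function: the function and its
gradient are in `L²`. -/
def MemH1 {n : ℕ} (u : Rn n → ℝ) : Prop :=
  MemLp u 2 volume ∧ MemLp (gradient u) 2 volume

/-- The charge `Q(u,v) = ∫ (u² + 2v²)`. -/
def Qf {n : ℕ} (u v : Rn n → ℝ) : ℝ := ∫ x : Rn n, (u x ^ 2 + 2 * v x ^ 2)

/-- `K(u,v) = ∫ (|∇u|² + κ|∇v|²)`. -/
def Kf {n : ℕ} (κ : ℝ) (u v : Rn n → ℝ) : ℝ :=
  ∫ x : Rn n, (‖gradient u x‖ ^ 2 + κ * ‖gradient v x‖ ^ 2)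

/-- `P(u,v) = ∫ u² v`. -/
def Pf {n : ℕ} (u v : Rn n → ℝ) : ℝ := ∫ x : Rn n, u x ^ 2 * v x

/-- The action functional `I_ω = ½K + (ω/2)Q − P`. -/
def If {n : ℕ} (κ ω : ℝ) (u v : Rn n → ℝ) : ℝ :=
  (1 / 2) * Kf κ u v + (ω / 2) * Qf u v - Pf u v

/-- A test function: smooth and compactly supported. -/
def IsTest {n : ℕ} (f : Rn n → ℝ) : Prop := ContDiff ℝ (⊤ : ℕ∞) f ∧ HasCompactSupport f

/-- Weak solution of `−Δφ + ωφ = 2φψ`, `−κΔψ + 2ωψ = φ²`. -/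
def IsWeakSolution {n : ℕ} (κ ω : ℝ) (φ ψ : Rn n → ℝ) : Prop :=
  MemH1 φ ∧ MemH1 ψ ∧
  (∀ f : Rn n → ℝ, IsTest f →
    ∫ x : Rn n, (⟪gradient φ x, gradient f x⟫ + ω * φ x * f x)
      = 2 * ∫ x : Rn n, φ x * ψ x * f x) ∧
  (∀ g : Rn n → ℝ, IsTest g →
    ∫ x : Rn n, (κ * ⟪gradient ψ x, gradient g x⟫ + 2 * ω * ψ x * g x)
      = ∫ x : Rn n, φ x ^ 2 * g x)

/-- The pair `(φ,ψ)` is nontrivial. -/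
def NontrivialPair {n : ℕ} (φ ψ : Rn n → ℝ) : Prop := ¬(φ = 0 ∧ ψ = 0)

/-- A ground state: a nontrivial weak solution minimizing `I_ω` among all
nontrivial weak solutions. -/
def IsGroundState {n : ℕ} (κ ω : ℝ) (φ ψ : Rn n → ℝ) : Prop :=
  IsWeakSolution κ ω φ ψ ∧ NontrivialPair φ ψ ∧
  ∀ φ' ψ' : Rn n → ℝ, IsWeakSolution κ ω φ' ψ' → NontrivialPair φ' ψ' →
    If κ ω φ ψ ≤ If κ ω φ' ψ'

/-- The Weinstein functional `J = Q^{3/2−n/4} K^{n/4} / P`. -/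
def Jf {n : ℕ} (κ : ℝ) (u v : Rn n → ℝ) : ℝ :=
  Qf u v ^ ((3 : ℝ) / 2 - (n : ℝ) / 4) * Kf κ u v ^ ((n : ℝ) / 4) / Pf u v

/-- The set `𝒫` of admissible pairs. -/
def PPos (n : ℕ) : Set ((Rn n → ℝ) × (Rn n → ℝ)) :=
  {p | MemH1 p.1 ∧ MemH1 p.2 ∧ NontrivialPair p.1 p.2 ∧ 0 < Pf p.1 p.2}

/-- `α₁ = inf_{𝒫} J`. -/
def alpha1 (n : ℕ) (κ : ℝ) : ℝ :=
  sInf ((fun p => Jf κ p.1 p.2) '' PPos n)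

/-- Radial symmetry. -/
def Radial {n : ℕ} (u : Rn n → ℝ) : Prop := ∀ x y : Rn n, ‖x‖ = ‖y‖ → u x = u y

/-- The rescaling `(t, l) • u = t · u(·/l)`. -/
def rescale {n : ℕ} (t l : ℝ) (u : Rn n → ℝ) : Rn n → ℝ := fun x => t * u (l⁻¹ • x)

/-- The energy of a real pair: `E = K − 2P`. -/
def Ef {n : ℕ} (κ : ℝ) (u v : Rn n → ℝ) : ℝ := Kf κ u v - 2 * Pf u v

/-! Complex-valued functionals. -/

/-- Partial derivative in the `i`-th coordinate direction. -/
def pderiv' {n : ℕ} (i : Fin n) (u : Rn n → ℂ) (x : Rn n) : ℂ :=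
  fderiv ℝ u x (EuclideanSpace.single i 1)

/-- `|∇u|² = ∑ᵢ |∂ᵢu|²` for a complex-valued `u`. -/
def gradSqC {n : ℕ} (u : Rn n → ℂ) (x : Rn n) : ℝ := ∑ i, ‖pderiv' i u x‖ ^ 2

/-- Membership in `H¹(ℝⁿ)` for a complex-valued function. -/
def MemH1C {n : ℕ} (u : Rn n → ℂ) : Prop :=
  MemLp u 2 volume ∧ MemLp (fun x => fderiv ℝ u x) 2 volume

/-- The charge of a complex pair. -/
def QC {n : ℕ} (u v : Rn n → ℂ) : ℝ := ∫ x : Rn n, (‖u x‖ ^ 2 + 2 * ‖v x‖ ^ 2)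

/-- `K` for a complex pair. -/
def KC {n : ℕ} (κ : ℝ) (u v : Rn n → ℂ) : ℝ :=
  ∫ x : Rn n, (gradSqC u x + κ * gradSqC v x)

/-- The energy `E(u,v) = K(u,v) − 2 Re ∫ v̄ u²`. -/
def EC {n : ℕ} (κ : ℝ) (u v : Rn n → ℂ) : ℝ :=
  KC κ u v - 2 * (∫ x : Rn n, (starRingEnd ℂ) (v x) * u x ^ 2).re

/-- Continuity-trapping lemma, part (i): if `G(0) < γ` then `G(t) < γ` on `I`. -/
theorem trapping_below (I : Set ℝ) (hIopen : IsOpen I) (hIconn : I.OrdConnected)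
    (h0I : (0 : ℝ) ∈ I) (a b q : ℝ) (hb : 0 < b) (hq : 1 < q)
    (G : ℝ → ℝ) (hGcont : ContinuousOn G I) (hGnn : ∀ t ∈ I, 0 ≤ G t)
    (hfG : ∀ t ∈ I, 0 ≤ a - G t + b * G t ^ q)
    (ha : a < (1 - 1 / q) * (b * q) ^ (-(1 / (q - 1))))
    (hG0 : G 0 < (b * q) ^ (-(1 / (q - 1)))) :
    ∀ t ∈ I, G t < (b * q) ^ (-(1 / (q - 1))) := by
  intro t ht
  by_contra hcon
  have hle := not_lt.mp hcon
  have hbq : 0 < b * q := mul_pos hb (by linarith)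
  have hpre : IsPreconnected I := hIconn.isPreconnected
  obtain ⟨s, hs, hsγ⟩ := hpre.intermediate_value h0I ht hGcont ⟨hG0.le, hle⟩
  have hf := hfG s hs
  rw [hsγ] at hf
  have hq1 : q - 1 ≠ 0 := by linarith
  have hγ : 0 < (b * q) ^ (-(1 / (q - 1))) := Real.rpow_pos_of_pos hbq _
  have hpow : ((b * q) ^ (-(1 / (q - 1)))) ^ q
      = (b * q) ^ (-(1 / (q - 1))) * (b * q)⁻¹ := by
    rw [← Real.rpow_mul hbq.le, ← Real.rpow_neg_one (b * q), ← Real.rpow_add hbq]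
    congr 1
    field_simp
    ring
  rw [hpow] at hf
  have hq0 : q ≠ 0 := by linarith
  have hb0 : b ≠ 0 := hb.ne'
  have hkey : b * ((b * q) ^ (-(1 / (q - 1))) * (b * q)⁻¹)
      = (1 / q) * (b * q) ^ (-(1 / (q - 1))) := by
    generalize (b * q) ^ (-(1 / (q - 1))) = g
    field_simp
  rw [hkey] at hf
  linarith

end
end

section
/- Let I be an open interval with 0 ∈ I, let a ∈ ℝ, b > 0 and q > 1, and set γ = (bq)^{−1/(q−1)} and f(r) = a − r + b r^q for r ≥ 0. Let G : I → ℝ be a nonnegative continuous function such that f(G(t)) ≥ 0 for all t ∈ I, and assume a < (1 − 1/q)γ. If G(0) > γ, then G(t) > γ for all t ∈ I. -/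
open MeasureTheory Real
open scoped RealInnerProductSpace

noncomputable section

/-- Continuity-trapping lemma, part (ii): if `G(0) > γ` then `G(t) > γ` on `I`. -/
theorem trapping_above (I : Set ℝ) (hIopen : IsOpen I) (hIconn : I.OrdConnected)
    (h0I : (0 : ℝ) ∈ I) (a b q : ℝ) (hb : 0 < b) (hq : 1 < q)
    (G : ℝ → ℝ) (hGcont : ContinuousOn G I) (hGnn : ∀ t ∈ I, 0 ≤ G t)
    (hfG : ∀ t ∈ I, 0 ≤ a - G t + b * G t ^ q)
    (ha : a < (1 - 1 / q) * (b * q) ^ (-(1 / (q - 1))))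
    (hG0 : G 0 > (b * q) ^ (-(1 / (q - 1)))) :
    ∀ t ∈ I, G t > (b * q) ^ (-(1 / (q - 1))) := by
  intro t ht
  by_contra hcon
  have hle : G t ≤ (b * q) ^ (-(1 / (q - 1))) := not_lt.mp hcon
  have hI : IsPreconnected I := hIconn.isPreconnected
  obtain ⟨s, hs, hGs⟩ := hI.intermediate_value ht h0I hGcont ⟨hle, hG0.le⟩
  have hf := hfG s hs
  have hbq : 0 < b * q := by positivity
  have hq0 : q ≠ 0 := by positivity
  have hq1 : q - 1 ≠ 0 := by linarith
  have hpos : 0 < (b * q) ^ (-(1 / (q - 1))) := rpow_pos_of_pos hbq _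
  have h1 : ((b * q) ^ (-(1 / (q - 1)))) ^ (q - 1) = (b * q)⁻¹ := by
    rw [← rpow_mul hbq.le, ← rpow_neg_one]
    congr 1
    field_simp
  have h2 : ((b * q) ^ (-(1 / (q - 1)))) ^ q
      = (b * q)⁻¹ * (b * q) ^ (-(1 / (q - 1))) := by
    rw [← h1, ← rpow_add_one hpos.ne', sub_add_cancel]
  rw [hGs, h2] at hf
  have h3 : b * ((b * q)⁻¹ * (b * q) ^ (-(1 / (q - 1))))
      = 1 / q * (b * q) ^ (-(1 / (q - 1))) := by
    rw [← mul_assoc]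
    congr 1
    field_simp
  rw [h3] at hf
  linarith

end
end

section
/- Let n be an integer with 1 ≤ n ≤ 6 and κ = 1/2. Let u, v : ℝ × ℝⁿ → ℂ be smooth, with u(t,·) and v(t,·) Schwartz functions for each t (with all time derivatives Schwartz, locally uniformly in t), satisfying the Schrödinger system i∂ₜu + Δu = −2 v ū and i∂ₜv + (1/2)Δv = −u² pointwise. Then the variance V(t) = ∫|x|²(|u(t,x)|² + 2|v(t,x)|²)dx is twice differentiable in t and V''(t) = 2n E(u(0,·),v(0,·)) + 2(4−n) K(u(t,·),v(t,·)) for all t. -/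
open MeasureTheory Real
open scoped RealInnerProductSpace

noncomputable section

/-- The (classical) Laplacian of a complex-valued function, as the sum of the
second partial derivatives in the coordinate directions. -/
def lapC {n : ℕ} (f : Rn n → ℂ) (x : Rn n) : ℂ :=
  ∑ i : Fin n, fderiv ℝ (fun y => fderiv ℝ f y (EuclideanSpace.single i 1)) x
    (EuclideanSpace.single i 1)

/-- `u(t,·)` is Schwartz for each `t`, together with all its time derivatives,
locally uniformly in `t`. -/
def SchwartzLike {n : ℕ} (u : ℝ → Rn n → ℂ) : Prop :=
  ∀ (j k m : ℕ) (T : ℝ), ∃ C : ℝ, ∀ t : ℝ, |t| ≤ T → ∀ x : Rn n,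
    ‖x‖ ^ k * ‖iteratedFDeriv ℝ m (fun y => iteratedDeriv j (fun s => u s y) t) x‖ ≤ C

/-- Partial derivative of a real-valued function. -/
def pdR {n : ℕ} (i : Fin n) (φ : Rn n → ℝ) (x : Rn n) : ℝ :=
  fderiv ℝ φ x (EuclideanSpace.single i 1)

/-- Second partial derivative `∂²φ/∂x_k∂x_j` of a real-valued function. -/
def d2R {n : ℕ} (j k : Fin n) (φ : Rn n → ℝ) (x : Rn n) : ℝ :=
  fderiv ℝ (fun y => fderiv ℝ φ y (EuclideanSpace.single j 1)) x
    (EuclideanSpace.single k 1)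

/-- The (classical) Laplacian of a real-valued function. -/
def lapR {n : ℕ} (φ : Rn n → ℝ) (x : Rn n) : ℝ := ∑ i, d2R i i φ x

/-! ### Rapidly decaying space-time functions -/

/-- jointly continuous, rapidly decaying in space locally uniformly in time -/
def Rap {n : ℕ} {F : Type*} [NormedAddCommGroup F] (f : ℝ → Rn n → F) : Prop :=
  (Continuous fun p : ℝ × Rn n => f p.1 p.2) ∧
  ∀ (k : ℕ) (T : ℝ), ∃ C : ℝ, ∀ t : ℝ, |t| ≤ T → ∀ x : Rn n, ‖x‖ ^ k * ‖f t x‖ ≤ C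

/-- coordinate derivative relation -/
def LD {n : ℕ} {F : Type*} [NormedAddCommGroup F] [NormedSpace ℝ F] (i : Fin n)
    (f f' : ℝ → Rn n → F) : Prop :=
  ∀ t x, HasLineDerivAt ℝ (f t) (f' t x) x (EuclideanSpace.single i 1)

/-- time derivative relation -/
def TD {n : ℕ} {F : Type*} [NormedAddCommGroup F] [NormedSpace ℝ F]
    (f f' : ℝ → Rn n → F) : Prop :=
  ∀ t x, HasDerivAt (fun s => f s x) (f' t x) t

section tools
variable {n : ℕ} {F : Type*} [NormedAddCommGroup F] [NormedSpace ℝ F]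

lemma Rap.add {f g : ℝ → Rn n → ℝ} (hf : Rap f) (hg : Rap g) :
    Rap (fun t x => f t x + g t x) := by
  refine ⟨hf.1.add hg.1, fun k T => ?_⟩
  obtain ⟨C, hC⟩ := hf.2 k T
  obtain ⟨D, hD⟩ := hg.2 k T
  refine ⟨C + D, fun t ht x => ?_⟩
  calc _ ≤ ‖x‖ ^ k * (‖f t x‖ + ‖g t x‖) := by gcongr; exact norm_add_le _ _
    _ ≤ _ := by rw [mul_add]; exact add_le_add (hC t ht x) (hD t ht x)

lemma Rap.mul {R : Type*} [NormedField R] {f g : ℝ → Rn n → R} (hf : Rap f) (hg : Rap g) :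
    Rap (fun t x => f t x * g t x) := by
  refine ⟨hf.1.mul hg.1, fun k T => ?_⟩
  obtain ⟨C, hC⟩ := hf.2 k T
  obtain ⟨D, hD⟩ := hg.2 0 T
  refine ⟨C * D, fun t ht x => ?_⟩
  have h1 := hC t ht x
  have h2 := hD t ht x
  rw [pow_zero, one_mul] at h2
  rw [norm_mul, ← mul_assoc]
  have : 0 ≤ ‖x‖ ^ k * ‖f t x‖ := by positivity
  exact mul_le_mul h1 h2 (norm_nonneg _) (this.trans h1)

lemma Rap.const_mul (c : ℝ) {f : ℝ → Rn n → ℝ} (hf : Rap f) :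
    Rap (fun t x => c * f t x) := by
  refine ⟨continuous_const.mul hf.1, fun k T => ?_⟩
  obtain ⟨C, hC⟩ := hf.2 k T
  refine ⟨|c| * C, fun t ht x => ?_⟩
  have h1 := hC t ht x
  rw [norm_mul, Real.norm_eq_abs, mul_left_comm]
  gcongr

lemma Rap.neg {f : ℝ → Rn n → ℝ} (hf : Rap f) : Rap (fun t x => - f t x) := by
  simpa using hf.const_mul (-1)

lemma Rap.sub {f g : ℝ → Rn n → ℝ} (hf : Rap f) (hg : Rap g) :
    Rap (fun t x => f t x - g t x) := by
  simpa [sub_eq_add_neg] using hf.add hg.neg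

lemma Rap.zero : Rap (fun (_ : ℝ) (_ : Rn n) => (0 : ℝ)) :=
  ⟨continuous_const, fun k T => ⟨0, fun t _ x => by simp⟩⟩

lemma Rap.sum {ι : Type*} (s : Finset ι) {f : ι → ℝ → Rn n → ℝ} (hf : ∀ i, Rap (f i)) :
    Rap (fun t x => ∑ i ∈ s, f i t x) := by
  classical
  induction s using Finset.induction_on with
  | empty => simpa using Rap.zero
  | insert a s ha ih => simp only [Finset.sum_insert ha]; exact (hf a).add ih

lemma Rap.pow_two {R : Type*} [NormedField R] {f : ℝ → Rn n → R} (hf : Rap f) : Rap (fun t x => f t x ^ 2) := by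
  simpa [sq] using hf.mul hf

lemma Rap.coord (i : Fin n) {f : ℝ → Rn n → ℝ} (hf : Rap f) :
    Rap (fun t x => x i * f t x) := by
  refine ⟨Continuous.mul (by fun_prop) hf.1, fun k T => ?_⟩
  obtain ⟨C, hC⟩ := hf.2 (k + 1) T
  refine ⟨C, fun t ht x => le_trans ?_ (hC t ht x)⟩
  rw [norm_mul, pow_succ, mul_assoc]
  gcongr
  exact PiLp.norm_apply_le x i

lemma Rap.normsq {f : ℝ → Rn n → ℝ} (hf : Rap f) :
    Rap (fun t x => ‖x‖ ^ 2 * f t x) := by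
  refine ⟨Continuous.mul (by fun_prop) hf.1, fun k T => ?_⟩
  obtain ⟨C, hC⟩ := hf.2 (k + 2) T
  refine ⟨C, fun t ht x => le_trans ?_ (hC t ht x)⟩
  rw [norm_mul, pow_add, mul_assoc]
  simp

lemma Rap.clm {G : Type*} [NormedAddCommGroup G] [NormedSpace ℝ G] (L : F →L[ℝ] G)
    {f : ℝ → Rn n → F} (hf : Rap f) : Rap (fun t x => L (f t x)) := by
  refine ⟨L.continuous.comp hf.1, fun k T => ?_⟩
  obtain ⟨C, hC⟩ := hf.2 k T
  refine ⟨‖L‖ * C, fun t ht x => ?_⟩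
  have h1 := hC t ht x
  calc _ ≤ ‖x‖ ^ k * (‖L‖ * ‖f t x‖) := by gcongr; exact L.le_opNorm _
    _ = ‖L‖ * (‖x‖ ^ k * ‖f t x‖) := by ring
    _ ≤ _ := by gcongr

lemma Rap.bound {f : ℝ → Rn n → F} (hf : Rap f) (T : ℝ) :
    ∃ g : Rn n → ℝ, Integrable g ∧ ∀ t, |t| ≤ T → ∀ x, ‖f t x‖ ≤ g x := by
  obtain ⟨C, hC⟩ := hf.2 0 T
  obtain ⟨D, hD⟩ := hf.2 (n + 1) T
  refine ⟨fun x => 2 ^ (n + 1) * (C + D) * (1 + ‖x‖) ^ (-((n : ℝ) + 1)),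
    (integrable_one_add_norm (by simp)).const_mul _, fun t ht x => ?_⟩
  have h1 := hC t ht x
  have h2 := hD t ht x
  rw [pow_zero, one_mul] at h1
  have hp : (0 : ℝ) < (1 + ‖x‖) ^ (n + 1) := by positivity
  have : (1 + ‖x‖) ^ (-((n : ℝ) + 1)) = ((1 + ‖x‖) ^ (n + 1))⁻¹ := by
    rw [Real.rpow_neg (by positivity)]
    congr 1
    exact_mod_cast Real.rpow_natCast (1 + ‖x‖) (n + 1)
  beta_reduce
  rw [this, ← div_eq_mul_inv, le_div_iff₀ hp]
  have h3 : (1 + ‖x‖) ^ (n + 1) ≤ 2 ^ (n + 1) * (1 + ‖x‖ ^ (n + 1)) := by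
    have := add_pow_le (zero_le_one) (norm_nonneg x) (n + 1)
    rw [one_pow] at this
    refine this.trans ?_
    gcongr
    · norm_num
    · omega
  calc ‖f t x‖ * (1 + ‖x‖) ^ (n + 1) ≤ ‖f t x‖ * (2 ^ (n + 1) * (1 + ‖x‖ ^ (n + 1))) := by gcongr
    _ = 2 ^ (n + 1) * (‖f t x‖ + ‖x‖ ^ (n + 1) * ‖f t x‖) := by ring
    _ ≤ _ := by gcongr

lemma Rap.cont {f : ℝ → Rn n → F} (hf : Rap f) (t : ℝ) : Continuous (f t) :=
  hf.1.comp (by fun_prop : Continuous fun x : Rn n => (t, x))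

lemma Rap.int {f : ℝ → Rn n → F} (hf : Rap f) (t : ℝ) : Integrable (f t) := by
  obtain ⟨g, hg, h⟩ := hf.bound |t|
  exact hg.mono' (hf.cont t).aestronglyMeasurable (Filter.Eventually.of_forall (h t le_rfl))

lemma TD.integral {f f' : ℝ → Rn n → ℝ} (hf : Rap f) (hf' : Rap f') (h : TD f f') (t : ℝ) :
    HasDerivAt (fun s => ∫ x, f s x) (∫ x, f' t x) t := by
  obtain ⟨g, hg, hb⟩ := hf'.bound (|t| + 1)
  refine (hasDerivAt_integral_of_dominated_loc_of_deriv_le (bound := g)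
    (Metric.ball_mem_nhds t one_pos)
    (Filter.Eventually.of_forall fun s => (hf.cont s).aestronglyMeasurable) (hf.int t)
    (hf'.cont t).aestronglyMeasurable (Filter.Eventually.of_forall fun x s hs => hb s ?_ x) hg
    (Filter.Eventually.of_forall fun x s _ => h s x)).2
  rw [Metric.mem_ball, Real.dist_eq] at hs
  have := abs_sub_abs_le_abs_sub s t
  linarith

lemma LD.integral {i : Fin n} {f f' : ℝ → Rn n → ℝ} (hf : Rap f) (hf' : Rap f') (h : LD i f f')
    (t : ℝ) : ∫ x, f' t x = 0 := by
  have := integral_bilinear_hasLineDerivAt_right_eq_neg_left_of_integrable (μ := volume)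
    (f := fun _ : Rn n => (1 : ℝ)) (f' := fun _ => 0) (g := f t) (g' := f' t)
    (v := EuclideanSpace.single i 1) (B := ContinuousLinearMap.mul ℝ ℝ)
    (by simp) (by simpa using hf'.int t) (by simpa using hf.int t)
    (fun x _ => by simpa [HasLineDerivAt] using hasDerivAt_const (0 : ℝ) (1 : ℝ))
    (fun x _ => h t x)
  simpa using this

/-- integrable with zero integral -/
def Z (f : Rn n → ℝ) : Prop := Integrable f ∧ ∫ x, f x = 0

lemma Z.add {f g : Rn n → ℝ} (hf : Z f) (hg : Z g) : Z (fun x => f x + g x) :=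
  ⟨hf.1.add hg.1, by rw [integral_add hf.1 hg.1, hf.2, hg.2, add_zero]⟩

lemma Z.smul {f : Rn n → ℝ} (c : ℝ) (hf : Z f) : Z (fun x => c * f x) :=
  ⟨hf.1.const_mul c, by rw [integral_const_mul, hf.2, mul_zero]⟩

lemma Z.congr {f g : Rn n → ℝ} (hf : Z f) (h : ∀ x, g x = f x) : Z g := by
  rwa [show g = f from funext h]

lemma Z.eq {z f g : Rn n → ℝ} (hz : Z z) (hg : Integrable g) (h : ∀ x, f x = g x + z x) :
    ∫ x, f x = ∫ x, g x := by
  rw [show f = fun x => g x + z x from funext h, integral_add hg hz.1, hz.2, add_zero]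

lemma div_zero_integral {f f' : Fin n → ℝ → Rn n → ℝ} (hf : ∀ i, Rap (f i))
    (hf' : ∀ i, Rap (f' i)) (h : ∀ i, LD i (f i) (f' i)) (t : ℝ) :
    Z (fun x => ∑ i, f' i t x) := by
  refine ⟨(Rap.sum _ hf').int t, ?_⟩
  rw [integral_finsetSum _ fun i _ => (hf' i).int t]
  exact Finset.sum_eq_zero fun i _ => LD.integral (hf i) (hf' i) (h i) t

lemma LD.congr {i : Fin n} {f f' g' : ℝ → Rn n → ℝ} (h : LD i f f')
    (e : ∀ t x, f' t x = g' t x) : LD i f g' := fun t x => e t x ▸ h t x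

lemma LD.mul {i : Fin n} {f f' g g' : ℝ → Rn n → ℝ} (h : LD i f f') (h' : LD i g g') :
    LD i (fun t x => f t x * g t x) (fun t x => f' t x * g t x + f t x * g' t x) := fun t x => by
  have := HasDerivAt.mul (h t x) (h' t x)
  simp only [zero_smul, add_zero] at this
  exact this

lemma LD.add {i : Fin n} {f f' g g' : ℝ → Rn n → ℝ} (h : LD i f f') (h' : LD i g g') :
    LD i (fun t x => f t x + g t x) (fun t x => f' t x + g' t x) := fun t x =>
  HasDerivAt.add (h t x) (h' t x)

lemma LD.sub {i : Fin n} {f f' g g' : ℝ → Rn n → ℝ} (h : LD i f f') (h' : LD i g g') :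
    LD i (fun t x => f t x - g t x) (fun t x => f' t x - g' t x) := fun t x =>
  HasDerivAt.sub (h t x) (h' t x)

lemma LD.const_mul {i : Fin n} (c : ℝ) {f f' : ℝ → Rn n → ℝ} (h : LD i f f') :
    LD i (fun t x => c * f t x) (fun t x => c * f' t x) := fun t x =>
  HasDerivAt.const_mul c (h t x)

lemma LD.sum {ι : Type*} (s : Finset ι) {i : Fin n} {f f' : ι → ℝ → Rn n → ℝ}
    (h : ∀ j, LD i (f j) (f' j)) :
    LD i (fun t x => ∑ j ∈ s, f j t x) (fun t x => ∑ j ∈ s, f' j t x) := fun t x =>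
  HasDerivAt.fun_sum fun j _ => h j t x

lemma LD.clm {G : Type*} [NormedAddCommGroup G] [NormedSpace ℝ G] (L : F →L[ℝ] G) {i : Fin n}
    {f f' : ℝ → Rn n → F} (h : LD i f f') :
    LD i (fun t x => L (f t x)) (fun t x => L (f' t x)) := fun t x =>
  L.hasFDerivAt.comp_hasDerivAt _ (h t x)

lemma LD.coord (i j : Fin n) :
    LD i (fun _ (x : Rn n) => x j) (fun _ _ => if j = i then 1 else 0) := fun t x => by
  have h := ((EuclideanSpace.proj j : Rn n →L[ℝ] ℝ).hasFDerivAt (x := x)).hasLineDerivAt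
    (EuclideanSpace.single i 1)
  have e : (EuclideanSpace.proj j : Rn n →L[ℝ] ℝ) (EuclideanSpace.single i 1)
      = if j = i then 1 else 0 := by
    simp
  rw [e] at h
  exact h

lemma LD.normsq (i : Fin n) :
    LD i (fun _ (x : Rn n) => ‖x‖ ^ 2) (fun _ x => 2 * x i) := fun t x => by
  have h := (hasStrictFDerivAt_norm_sq x).hasFDerivAt.hasLineDerivAt
    (EuclideanSpace.single i 1)
  have e : (2 • innerSL ℝ x : Rn n →L[ℝ] ℝ) (EuclideanSpace.single i 1) = 2 * x i := by
    simp [EuclideanSpace.inner_single_right]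
  rw [e] at h
  exact h

lemma TD.congr {f f' g' : ℝ → Rn n → ℝ} (h : TD f f')
    (e : ∀ t x, f' t x = g' t x) : TD f g' := fun t x => e t x ▸ h t x

lemma TD.mul {f f' g g' : ℝ → Rn n → ℝ} (h : TD f f') (h' : TD g g') :
    TD (fun t x => f t x * g t x) (fun t x => f' t x * g t x + f t x * g' t x) := fun t x =>
  HasDerivAt.mul (h t x) (h' t x)

lemma TD.add {f f' g g' : ℝ → Rn n → ℝ} (h : TD f f') (h' : TD g g') :
    TD (fun t x => f t x + g t x) (fun t x => f' t x + g' t x) := fun t x =>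
  HasDerivAt.add (h t x) (h' t x)

lemma TD.sub {f f' g g' : ℝ → Rn n → ℝ} (h : TD f f') (h' : TD g g') :
    TD (fun t x => f t x - g t x) (fun t x => f' t x - g' t x) := fun t x =>
  HasDerivAt.sub (h t x) (h' t x)

lemma TD.wmul (w : Rn n → ℝ) {f f' : ℝ → Rn n → ℝ} (h : TD f f') :
    TD (fun t x => w x * f t x) (fun t x => w x * f' t x) := fun t x =>
  HasDerivAt.const_mul (w x) (h t x)

lemma TD.sum {ι : Type*} (s : Finset ι) {f f' : ι → ℝ → Rn n → ℝ}
    (h : ∀ j, TD (f j) (f' j)) :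
    TD (fun t x => ∑ j ∈ s, f j t x) (fun t x => ∑ j ∈ s, f' j t x) := fun t x =>
  HasDerivAt.fun_sum fun j _ => h j t x

lemma TD.clm {G : Type*} [NormedAddCommGroup G] [NormedSpace ℝ G] (L : F →L[ℝ] G)
    {f f' : ℝ → Rn n → F} (h : TD f f') :
    TD (fun t x => L (f t x)) (fun t x => L (f' t x)) := fun t x =>
  L.hasFDerivAt.comp_hasDerivAt _ (h t x)

end tools

/-- all the derivatives needed -/
structure Nice {n : ℕ} {F : Type*} [NormedAddCommGroup F] [NormedSpace ℝ F]
    (a at' : ℝ → Rn n → F) (ai ati : Fin n → ℝ → Rn n → F)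
    (aij : Fin n → Fin n → ℝ → Rn n → F) : Prop where
  r : Rap a
  rt : Rap at'
  ri : ∀ i, Rap (ai i)
  rti : ∀ i, Rap (ati i)
  rij : ∀ i j, Rap (aij i j)
  td : TD a at'
  tdi : ∀ i, TD (ai i) (ati i)
  ld : ∀ i, LD i a (ai i)
  ldt : ∀ i, LD i at' (ati i)
  ldi : ∀ i j, LD j (ai i) (aij i j)
  symm : ∀ i j t x, aij i j t x = aij j i t x

lemma Nice.clm {n : ℕ} {F : Type*} [NormedAddCommGroup F] [NormedSpace ℝ F]
    {G : Type*} [NormedAddCommGroup G] [NormedSpace ℝ G] (L : F →L[ℝ] G)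
    {a at' : ℝ → Rn n → F} {ai ati : Fin n → ℝ → Rn n → F}
    {aij : Fin n → Fin n → ℝ → Rn n → F} (h : Nice a at' ai ati aij) :
    Nice (fun t x => L (a t x)) (fun t x => L (at' t x)) (fun i t x => L (ai i t x))
      (fun i t x => L (ati i t x)) (fun i j t x => L (aij i j t x)) where
  r := h.r.clm L
  rt := h.rt.clm L
  ri i := (h.ri i).clm L
  rti i := (h.rti i).clm L
  rij i j := (h.rij i j).clm L
  td := h.td.clm L
  tdi i := (h.tdi i).clm L
  ld i := (h.ld i).clm L
  ldt i := (h.ldt i).clm L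
  ldi i j := (h.ldi i j).clm L
  symm i j t x := by simp only [h.symm i j t x]

section core
variable {n : ℕ}

/-- Pohozaev-type identity -/
lemma Nice.pohozaev {a aT : ℝ → Rn n → ℝ} {ai aTi : Fin n → ℝ → Rn n → ℝ}
    {aij : Fin n → Fin n → ℝ → Rn n → ℝ} (h : Nice a aT ai aTi aij) (t : ℝ) :
    Z (fun x => ((∑ i, x i * ai i t x) * (∑ j, aij j j t x)
      + (1 - (n : ℝ) / 2) * ∑ i, ai i t x ^ 2)) := by
  have key := div_zero_integral (n := n)
    (f := fun j t x => (∑ i, x i * ai i t x) * ai j t x - (1 / 2) * (x j * ∑ i, ai i t x * ai i t x))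
    (f' := fun j t x => ((∑ i, ((if i = j then 1 else 0) * ai i t x + x i * aij i j t x)) * ai j t x
      + (∑ i, x i * ai i t x) * aij j j t x)
      - (1 / 2) * ((if j = j then 1 else 0) * (∑ i, ai i t x * ai i t x)
        + x j * ∑ i, (aij i j t x * ai i t x + ai i t x * aij i j t x)))
    (fun j => by
      have := h.ri; have := h.rij
      apply_rules [Rap.coord, Rap.sub, Rap.add, Rap.sum, Rap.const_mul, Rap.mul]
      all_goals (intro i; apply_rules [Rap.coord, Rap.mul]))
    (fun j => by
      have := h.ri; have := h.rij
      apply_rules [Rap.coord, Rap.sub, Rap.add, Rap.sum, Rap.const_mul, Rap.mul]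
      all_goals (intro i; apply_rules [Rap.coord, Rap.add, Rap.const_mul, Rap.mul]))
    (fun j => (((LD.sum _ fun i => (LD.coord j i).mul (h.ldi i j)).mul (h.ldi j j)).sub
      (((LD.coord j j).mul (LD.sum _ fun i => (h.ldi i j).mul (h.ldi i j))).const_mul (1 / 2)))) t
  refine key.congr fun x => ?_
  beta_reduce
  simp only [Finset.sum_add_distrib, Finset.sum_sub_distrib, if_true, one_mul, ite_mul, zero_mul,
    Finset.sum_ite_eq', Finset.mem_univ, ← Finset.mul_sum, add_mul, Finset.sum_const,
    Finset.card_univ, Fintype.card_fin, nsmul_eq_mul]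
  have e : ∑ j, (∑ i, x i * aij i j t x) * ai j t x
      = ∑ j, x j * ∑ i, aij i j t x * ai i t x := by
    simp only [Finset.sum_mul, Finset.mul_sum]
    rw [Finset.sum_comm]
    refine Finset.sum_congr rfl fun i _ => Finset.sum_congr rfl fun j _ => ?_
    rw [h.symm i j t x]; ring
  have e2 : ∑ j, x j * (∑ i, aij i j t x * ai i t x + ∑ i, ai i t x * aij i j t x)
      = 2 * ∑ j, x j * ∑ i, aij i j t x * ai i t x := by
    rw [Finset.mul_sum]
    refine Finset.sum_congr rfl fun j _ => ?_
    have : ∑ i, ai i t x * aij i j t x = ∑ i, aij i j t x * ai i t x :=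
      Finset.sum_congr rfl fun i _ => mul_comm _ _
    rw [this]; ring
  rw [e, e2]
  simp only [pow_two]
  ring

/-- Green identity -/
lemma Nice.green {a aT : ℝ → Rn n → ℝ} {ai aTi : Fin n → ℝ → Rn n → ℝ}
    {aij : Fin n → Fin n → ℝ → Rn n → ℝ} (h : Nice a aT ai aTi aij) (t : ℝ) :
    Z (fun x => (a t x * (∑ j, aij j j t x) + ∑ i, ai i t x ^ 2)) := by
  have key := div_zero_integral (n := n)
    (f := fun j t x => a t x * ai j t x)
    (f' := fun j t x => ai j t x * ai j t x + a t x * aij j j t x)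
    (fun j => h.r.mul (h.ri j)) (fun j => ((h.ri j).mul (h.ri j)).add (h.r.mul (h.rij j j)))
    (fun j => (h.ld j).mul (h.ldi j j)) t
  refine key.congr fun x => ?_
  simp only [Finset.sum_add_distrib, ← Finset.mul_sum, pow_two]
  ring

/-- Time-gradient Green identity -/
lemma Nice.greenT {a aT : ℝ → Rn n → ℝ} {ai aTi : Fin n → ℝ → Rn n → ℝ}
    {aij : Fin n → Fin n → ℝ → Rn n → ℝ} (h : Nice a aT ai aTi aij) (t : ℝ) :
    Z (fun x => (aT t x * (∑ j, aij j j t x) + ∑ i, ai i t x * aTi i t x)) := by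
  have key := div_zero_integral (n := n)
    (f := fun j t x => aT t x * ai j t x)
    (f' := fun j t x => aTi j t x * ai j t x + aT t x * aij j j t x)
    (fun j => h.rt.mul (h.ri j)) (fun j => ((h.rti j).mul (h.ri j)).add (h.rt.mul (h.rij j j)))
    (fun j => (h.ldt j).mul (h.ldi j j)) t
  refine key.congr fun x => ?_
  simp only [Finset.sum_add_distrib, ← Finset.mul_sum]
  rw [add_comm]
  congr 1
  exact Finset.sum_congr rfl fun i _ => mul_comm _ _

/-- first moment identity -/
lemma wronskian {a aT b bT : ℝ → Rn n → ℝ} {ai aTi bi bTi : Fin n → ℝ → Rn n → ℝ}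
    {aij bij : Fin n → Fin n → ℝ → Rn n → ℝ} (h : Nice a aT ai aTi aij)
    (k : Nice b bT bi bTi bij) (t : ℝ) :
    Z (fun x => (‖x‖ ^ 2 * (a t x * (∑ j, bij j j t x) - b t x * ∑ j, aij j j t x)
      + 2 * ∑ i, x i * (a t x * bi i t x - b t x * ai i t x))) := by
  have key := div_zero_integral (n := n)
    (f := fun j t x => ‖x‖ ^ 2 * (a t x * bi j t x - b t x * ai j t x))
    (f' := fun j t x => 2 * x j * (a t x * bi j t x - b t x * ai j t x) +
      ‖x‖ ^ 2 * (a t x * bij j j t x - b t x * aij j j t x))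
    (fun j => by
      have := h.ri; have := h.r; have := k.r; have := k.ri
      apply_rules [Rap.normsq, Rap.sub, Rap.mul])
    (fun j => by
      have := h.ri; have := h.r; have := k.r; have := k.ri; have := h.rij; have := k.rij
      simp only [mul_assoc]
      apply_rules [Rap.normsq, Rap.coord, Rap.sub, Rap.add, Rap.const_mul, Rap.mul])
    (fun j => ((LD.normsq j).mul (((h.ld j).mul (k.ldi j j)).sub
      ((k.ld j).mul (h.ldi j j)))).congr (fun t x => by ring)) t
  refine key.congr fun x => ?_
  simp only [Finset.sum_add_distrib, ← Finset.mul_sum, Finset.sum_sub_distrib, mul_assoc]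
  ring

/-- dilation momentum: moving the space derivative off the time derivative -/
lemma dilation {a aT b bT : ℝ → Rn n → ℝ} {ai aTi bi bTi : Fin n → ℝ → Rn n → ℝ}
    {aij bij : Fin n → Fin n → ℝ → Rn n → ℝ} (h : Nice a aT ai aTi aij)
    (k : Nice b bT bi bTi bij) (t : ℝ) :
    Z (fun x => ((n : ℝ) * (a t x * bT t x)
      + bT t x * (∑ i, x i * ai i t x) + ∑ i, x i * (a t x * bTi i t x))) := by
  have key := div_zero_integral (n := n)
    (f := fun j t x => x j * (a t x * bT t x))
    (f' := fun j t x => (if j = j then 1 else 0) * (a t x * bT t x) +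
      x j * (ai j t x * bT t x + a t x * bTi j t x))
    (fun j => by
      have := h.r; have := k.rt
      apply_rules [Rap.coord, Rap.mul])
    (fun j => by
      have := h.ri; have := h.r; have := k.rt; have := k.rti
      apply_rules [Rap.coord, Rap.add, Rap.const_mul, Rap.mul])
    (fun j => (LD.coord j j).mul ((h.ld j).mul (k.ldt j))) t
  refine key.congr fun x => ?_
  simp only [Finset.sum_add_distrib, if_true, one_mul, mul_add, Finset.sum_const,
    Finset.card_univ, Fintype.card_fin, nsmul_eq_mul, Finset.mul_sum]
  rw [add_assoc]
  congr 2
  exact Finset.sum_congr rfl fun i _ => by ring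

/-- Euler identity for a scalar density -/
lemma euler {N : ℝ → Rn n → ℝ} {Ni : Fin n → ℝ → Rn n → ℝ} (h : Rap N) (hi : ∀ i, Rap (Ni i))
    (hl : ∀ i, LD i N (Ni i)) (t : ℝ) :
    Z (fun x => ((∑ i, x i * Ni i t x) + (n : ℝ) * N t x)) := by
  have key := div_zero_integral (n := n)
    (f := fun j t x => x j * N t x)
    (f' := fun j t x => (if j = j then 1 else 0) * N t x + x j * Ni j t x)
    (fun j => h.coord j)
    (fun j => (h.const_mul _).add ((hi j).coord j))
    (fun j => (LD.coord j j).mul (hl j)) t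
  refine key.congr fun x => ?_
  simp only [Finset.sum_add_distrib, if_true, one_mul, Finset.sum_const,
    Finset.card_univ, Fintype.card_fin, nsmul_eq_mul]
  ring

end core

section core2
variable {n : ℕ}

theorem core {a aT b bT c cT d dT : ℝ → Rn n → ℝ}
    {ai aTi bi bTi ci cTi di dTi : Fin n → ℝ → Rn n → ℝ}
    {aij bij cij dij : Fin n → Fin n → ℝ → Rn n → ℝ} (ha : Nice a aT ai aTi aij)
    (hb : Nice b bT bi bTi bij) (hc : Nice c cT ci cTi cij) (hd : Nice d dT di dTi dij)
    (ea : ∀ t x, aT t x = -(∑ i, bij i i t x) - 2 * (d t x * a t x - c t x * b t x))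
    (eb : ∀ t x, bT t x = (∑ i, aij i i t x) + 2 * (c t x * a t x + d t x * b t x))
    (ec : ∀ t x, cT t x = -(1 / 2) * (∑ i, dij i i t x) - 2 * (a t x * b t x))
    (ed : ∀ t x, dT t x = (1 / 2) * (∑ i, cij i i t x) + (a t x * a t x - b t x * b t x)) :
    (∃ W : ℝ → ℝ,
      (∀ t : ℝ, HasDerivAt (fun s => ∫ x : Rn n, ‖x‖ ^ 2 *
        ((a s x * a s x + b s x * b s x) + 2 * (c s x * c s x + d s x * d s x))) (W t) t) ∧
      (∀ t : ℝ, HasDerivAt W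
        (∫ x : Rn n, (8 * (((∑ i, ai i t x ^ 2) + ∑ i, bi i t x ^ 2)
          + (1 / 2) * ((∑ i, ci i t x ^ 2) + ∑ i, di i t x ^ 2))
          - 4 * n * (c t x * (a t x * a t x - b t x * b t x)
              + 2 * (d t x * (a t x * b t x))))) t)) ∧
    ∀ t : ℝ, HasDerivAt (fun s => ∫ x : Rn n, ((((∑ i, ai i s x ^ 2) + ∑ i, bi i s x ^ 2)
          + (1 / 2) * ((∑ i, ci i s x ^ 2) + ∑ i, di i s x ^ 2))
          - 2 * (c s x * (a s x * a s x - b s x * b s x)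
              + 2 * (d s x * (a s x * b s x))))) 0 t := by
  have a0 := ha.r; have a1 := ha.rt; have a2 := ha.ri; have a3 := ha.rti; have a4 := ha.rij
  have b0 := hb.r; have b1 := hb.rt; have b2 := hb.ri; have b3 := hb.rti; have b4 := hb.rij
  have c0 := hc.r; have c1 := hc.rt; have c2 := hc.ri; have c3 := hc.rti; have c4 := hc.rij
  have d0 := hd.r; have d1 := hd.rt; have d2 := hd.ri; have d3 := hd.rti; have d4 := hd.rij
  have rN : Rap (fun t x => c t x * (a t x * a t x - b t x * b t x)
              + 2 * (d t x * (a t x * b t x))) := by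
    apply_rules [Rap.sub, Rap.add, Rap.const_mul, Rap.mul]
  have rK : Rap (fun t x => (((∑ i, ai i t x ^ 2) + ∑ i, bi i t x ^ 2)
          + (1 / 2) * ((∑ i, ci i t x ^ 2) + ∑ i, di i t x ^ 2))) :=
    ((Rap.sum _ fun i => (a2 i).pow_two).add (Rap.sum _ fun i => (b2 i).pow_two)).add
      (((Rap.sum _ fun i => (c2 i).pow_two).add (Rap.sum _ fun i => (d2 i).pow_two)).const_mul _)
  have rG1 : Rap (fun t x => ∑ i, x i * (a t x * bi i t x - b t x * ai i t x)) :=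
    Rap.sum _ fun i => ((a0.mul (b2 i)).sub (b0.mul (a2 i))).coord i
  have rG2 : Rap (fun t x => ∑ i, x i * (c t x * di i t x - d t x * ci i t x)) :=
    Rap.sum _ fun i => ((c0.mul (d2 i)).sub (d0.mul (c2 i))).coord i
  have rG := (rG1.add rG2).const_mul 4
  constructor
  · refine ⟨fun t => ∫ x, 4 * ((∑ i, x i * (a t x * bi i t x - b t x * ai i t x))
      + ∑ i, x i * (c t x * di i t x - d t x * ci i t x)), fun t => ?_, fun t => ?_⟩
    · have h1 := TD.integral
        (f := fun t x => ‖x‖ ^ 2 *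
          ((a t x * a t x + b t x * b t x) + 2 * (c t x * c t x + d t x * d t x)))
        (f' := fun t x => ‖x‖ ^ 2 * (((aT t x * a t x + a t x * aT t x)
            + (bT t x * b t x + b t x * bT t x))
          + 2 * ((cT t x * c t x + c t x * cT t x) + (dT t x * d t x + d t x * dT t x))))
        (by apply_rules [Rap.normsq, Rap.add, Rap.const_mul, Rap.mul])
        (by apply_rules [Rap.normsq, Rap.add, Rap.const_mul, Rap.mul])
        (TD.wmul (fun x => ‖x‖ ^ 2) (((ha.td.mul ha.td).add (hb.td.mul hb.td)).add
          (TD.wmul (fun _ => 2) ((hc.td.mul hc.td).add (hd.td.mul hd.td))))) t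
      convert h1 using 1
      symm
      refine (((wronskian ha hb t).smul (-2)).add ((wronskian hc hd t).smul (-2))).eq
        (rG.int t) fun x => ?_
      beta_reduce
      rw [ea, eb, ec, ed]
      ring
    · have h1 := TD.integral
        (f := fun t x => 4 * ((∑ i, x i * (a t x * bi i t x - b t x * ai i t x))
          + ∑ i, x i * (c t x * di i t x - d t x * ci i t x)))
        (f' := fun t x => 4 * ((∑ i, x i * ((aT t x * bi i t x + a t x * bTi i t x)
            - (bT t x * ai i t x + b t x * aTi i t x)))
          + ∑ i, x i * ((cT t x * di i t x + c t x * dTi i t x)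
            - (dT t x * ci i t x + d t x * cTi i t x)))) rG
        (((Rap.sum _ fun i => (((a1.mul (b2 i)).add (a0.mul (b3 i))).sub
            ((b1.mul (a2 i)).add (b0.mul (a3 i)))).coord i).add
          (Rap.sum _ fun i => (((c1.mul (d2 i)).add (c0.mul (d3 i))).sub
            ((d1.mul (c2 i)).add (d0.mul (c3 i)))).coord i)).const_mul 4)
        (TD.wmul (fun _ => 4) ((TD.sum _ fun i => TD.wmul (fun x => x i)
            ((ha.td.mul (hb.tdi i)).sub (hb.td.mul (ha.tdi i)))).add
          (TD.sum _ fun i => TD.wmul (fun x => x i)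
            ((hc.td.mul (hd.tdi i)).sub (hd.td.mul (hc.tdi i)))))) t
      convert h1 using 1
      symm
      have zE := euler (N := fun t x => c t x * (a t x * a t x - b t x * b t x)
              + 2 * (d t x * (a t x * b t x)))
        (Ni := fun i t x => (2 * (c t x * a t x + d t x * b t x)) * ai i t x
          + (2 * (d t x * a t x - c t x * b t x)) * bi i t x
          + (a t x * a t x - b t x * b t x) * ci i t x + (2 * (a t x * b t x)) * di i t x)
        rN (fun i => by apply_rules [Rap.sub, Rap.add, Rap.const_mul, Rap.mul])
        (fun i => LD.congr (((hc.ld i).mul (((ha.ld i).mul (ha.ld i)).sub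
          ((hb.ld i).mul (hb.ld i)))).add
            (((hd.ld i).mul ((ha.ld i).mul (hb.ld i))).const_mul 2)) (fun t x => by ring)) t
      have rI : Rap (fun t x => (8 * (((∑ i, ai i t x ^ 2) + ∑ i, bi i t x ^ 2)
          + (1 / 2) * ((∑ i, ci i t x ^ 2) + ∑ i, di i t x ^ 2))
          - 4 * n * (c t x * (a t x * a t x - b t x * b t x)
              + 2 * (d t x * (a t x * b t x))))) := (rK.const_mul 8).sub (rN.const_mul (4 * n))
      refine ((((((((dilation ha hb t).smul 4).add ((dilation hb ha t).smul (-4))).add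
        ((dilation hc hd t).smul 4)).add ((dilation hd hc t).smul (-4))).add
        (((((ha.green t).smul 1).add ((hb.green t).smul 1)).add
          (((hc.green t).smul (1/2)).add ((hd.green t).smul (1/2)))).smul (-4 * n))).add
        (((((ha.pohozaev t).smul 1).add ((hb.pohozaev t).smul 1)).add
          (((hc.pohozaev t).smul (1/2)).add ((hd.pohozaev t).smul (1/2)))).smul (-8))).add
        (zE.smul (-8))).eq (rI.int t) fun x => ?_
      beta_reduce
      have s1 : ∀ (p q p' q' : ℝ) (f g f' g' : Fin n → ℝ),
          ∑ i, x i * ((p * f i + q * g i) - (p' * f' i + q' * g' i))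
          = p * (∑ i, x i * f i) + (∑ i, x i * (q * g i)) - p' * (∑ i, x i * f' i)
            - (∑ i, x i * (q' * g' i)) := by
        intro p q p' q' f g f' g'
        simp only [Finset.mul_sum, ← Finset.sum_add_distrib, ← Finset.sum_sub_distrib]
        exact Finset.sum_congr rfl fun i _ => by ring
      have s2 : ∀ (p q r s : ℝ) (f g f' g' : Fin n → ℝ),
          ∑ i, x i * (p * f i + q * g i + r * f' i + s * g' i)
          = p * (∑ i, x i * f i) + q * (∑ i, x i * g i) + r * (∑ i, x i * f' i)
            + s * (∑ i, x i * g' i) := by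
        intro p q p' q' f g f' g'
        simp only [Finset.mul_sum, ← Finset.sum_add_distrib]
        exact Finset.sum_congr rfl fun i _ => by ring
      rw [s1 _ _ _ _ (fun i => bi i t x) (fun i => bTi i t x) (fun i => ai i t x)
          (fun i => aTi i t x),
        s1 _ _ _ _ (fun i => di i t x) (fun i => dTi i t x) (fun i => ci i t x)
          (fun i => cTi i t x),
        s2 _ _ _ _ (fun i => ai i t x) (fun i => bi i t x) (fun i => ci i t x)
          (fun i => di i t x), ea, eb, ec, ed]
      ring
  · intro t
    have h1 := TD.integral
      (f := fun t x => (((∑ i, ai i t x * ai i t x) + ∑ i, bi i t x * bi i t x)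
          + (1 / 2) * ((∑ i, ci i t x * ci i t x) + ∑ i, di i t x * di i t x))
          - 2 * (c t x * (a t x * a t x - b t x * b t x)
              + 2 * (d t x * (a t x * b t x))))
      (f' := fun t x => (((∑ i, (aTi i t x * ai i t x + ai i t x * aTi i t x))
            + ∑ i, (bTi i t x * bi i t x + bi i t x * bTi i t x))
          + (1 / 2) * ((∑ i, (cTi i t x * ci i t x + ci i t x * cTi i t x))
            + ∑ i, (dTi i t x * di i t x + di i t x * dTi i t x)))
          - 2 * ((cT t x * (a t x * a t x - b t x * b t x)
              + c t x * ((aT t x * a t x + a t x * aT t x) - (bT t x * b t x + b t x * bT t x)))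
              + 2 * (dT t x * (a t x * b t x) + d t x * (aT t x * b t x + a t x * bT t x))))
      (by simpa only [pow_two] using rK.sub (rN.const_mul 2))
      ((((Rap.sum _ fun i => ((a3 i).mul (a2 i)).add ((a2 i).mul (a3 i))).add
          (Rap.sum _ fun i => ((b3 i).mul (b2 i)).add ((b2 i).mul (b3 i)))).add
        (((Rap.sum _ fun i => ((c3 i).mul (c2 i)).add ((c2 i).mul (c3 i))).add
          (Rap.sum _ fun i => ((d3 i).mul (d2 i)).add ((d2 i).mul (d3 i)))).const_mul _)).sub
        (by apply_rules [Rap.sub, Rap.add, Rap.const_mul, Rap.mul]))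
      ((((TD.sum _ fun i => (ha.tdi i).mul (ha.tdi i)).add
          (TD.sum _ fun i => (hb.tdi i).mul (hb.tdi i))).add
        (TD.wmul (fun _ => 1 / 2) ((TD.sum _ fun i => (hc.tdi i).mul (hc.tdi i)).add
          (TD.sum _ fun i => (hd.tdi i).mul (hd.tdi i))))).sub
        (TD.wmul (fun _ => 2) ((hc.td.mul ((ha.td.mul ha.td).sub (hb.td.mul hb.td))).add
          (TD.wmul (fun _ => 2) (hd.td.mul (ha.td.mul hb.td)))))) t
    simp only [pow_two]
    convert h1 using 1
    symm
    refine Z.congr (f := _) ((((ha.greenT t).smul 2).add ((hb.greenT t).smul 2)).add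
      (((hc.greenT t).smul 1).add ((hd.greenT t).smul 1))) (fun x => ?_) |>.2
    beta_reduce
    have s1 : ∀ f g : Fin n → ℝ, ∑ i, (g i * f i + f i * g i) = 2 * ∑ i, f i * g i := by
      intro f g
      rw [Finset.mul_sum]
      exact Finset.sum_congr rfl fun i _ => by ring
    rw [s1 (fun i => ai i t x), s1 (fun i => bi i t x), s1 (fun i => ci i t x),
      s1 (fun i => di i t x), ea, eb, ec, ed]
    ring

end core2

section extract
variable {n : ℕ}

lemma smooth_dir {E : Type*} [NormedAddCommGroup E] [NormedSpace ℝ E] {f : E → ℂ}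
    (hf : ContDiff ℝ (⊤ : ℕ∞) f) (e : E) :
    ContDiff ℝ (⊤ : ℕ∞) (fun p => fderiv ℝ f p e) :=
  (hf.fderiv_right (m := (⊤ : ℕ∞)) le_rfl).clm_apply contDiff_const

lemma dir_comm {E : Type*} [NormedAddCommGroup E] [NormedSpace ℝ E] {f : E → ℂ}
    (hf : ContDiff ℝ (⊤ : ℕ∞) f) (e e' p : E) :
    fderiv ℝ (fun q => fderiv ℝ f q e) p e' = fderiv ℝ (fun q => fderiv ℝ f q e') p e := by
  have hd : DifferentiableAt ℝ (fderiv ℝ f) p :=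
    ((hf.fderiv_right (m := (⊤ : ℕ∞)) le_rfl).differentiable (by simp)) p
  have h2 := (hf.contDiffAt (x := p)).isSymmSndFDerivAt
    (by rw [minSmoothness_of_isRCLikeNormedField]; exact WithTop.coe_le_coe.2 (le_top : (2 : ℕ∞) ≤ ⊤)) e e'
  have h3 : ∀ w, fderiv ℝ (fun q => fderiv ℝ f q w) p = (fderiv ℝ (fderiv ℝ f) p).flip w := by
    intro w
    rw [fderiv_clm_apply hd (differentiableAt_const w)]
    simp
  rw [h3, h3]
  simpa using h2.symm

lemma space_deriv {u : ℝ → Rn n → ℂ} (hu : ContDiff ℝ (⊤ : ℕ∞) fun p : ℝ × Rn n => u p.1 p.2)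
    (t : ℝ) (x : Rn n) :
    HasFDerivAt (u t) ((fderiv ℝ (fun p : ℝ × Rn n => u p.1 p.2) (t, x)).comp
      (ContinuousLinearMap.inr ℝ ℝ (Rn n))) x := by
  have h := ((hu.differentiable (by simp)) (t, x)).hasFDerivAt
  exact h.comp x (hasFDerivAt_prodMk_right t x)

lemma time_deriv {u : ℝ → Rn n → ℂ} (hu : ContDiff ℝ (⊤ : ℕ∞) fun p : ℝ × Rn n => u p.1 p.2)
    (t : ℝ) (x : Rn n) :
    HasDerivAt (fun s => u s x) (fderiv ℝ (fun p : ℝ × Rn n => u p.1 p.2) (t, x) (1, 0)) t := by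
  have h := ((hu.differentiable (by simp)) (t, x)).hasFDerivAt
  have := (h.comp t (hasFDerivAt_prodMk_left t x)).hasDerivAt
  simp only [ContinuousLinearMap.comp_apply, ContinuousLinearMap.inl_apply] at this
  exact this

lemma space_eq {u : ℝ → Rn n → ℂ} (hu : ContDiff ℝ (⊤ : ℕ∞) fun p : ℝ × Rn n => u p.1 p.2)
    (w : Rn n) : (fun p : ℝ × Rn n => fderiv ℝ (u p.1) p.2 w)
      = fun p => fderiv ℝ (fun p : ℝ × Rn n => u p.1 p.2) p (0, w) := by
  funext p
  rw [(space_deriv hu p.1 p.2).fderiv]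
  simp

lemma time_eq {u : ℝ → Rn n → ℂ} (hu : ContDiff ℝ (⊤ : ℕ∞) fun p : ℝ × Rn n => u p.1 p.2) :
    (fun p : ℝ × Rn n => deriv (fun s => u s p.2) p.1)
      = fun p => fderiv ℝ (fun p : ℝ × Rn n => u p.1 p.2) p (1, 0) := by
  funext p
  rw [(time_deriv hu p.1 p.2).deriv]

lemma space_smooth {u : ℝ → Rn n → ℂ} (hu : ContDiff ℝ (⊤ : ℕ∞) fun p : ℝ × Rn n => u p.1 p.2)
    (w : Rn n) : ContDiff ℝ (⊤ : ℕ∞) (fun p : ℝ × Rn n => fderiv ℝ (u p.1) p.2 w) := by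
  rw [space_eq hu]; exact smooth_dir hu _

lemma time_smooth {u : ℝ → Rn n → ℂ} (hu : ContDiff ℝ (⊤ : ℕ∞) fun p : ℝ × Rn n => u p.1 p.2) :
    ContDiff ℝ (⊤ : ℕ∞) (fun p : ℝ × Rn n => deriv (fun s => u s p.2) p.1) := by
  rw [time_eq hu]; exact smooth_dir hu _

lemma space_LD {u : ℝ → Rn n → ℂ} (hu : ContDiff ℝ (⊤ : ℕ∞) fun p : ℝ × Rn n => u p.1 p.2)
    (i : Fin n) : LD i u (fun t x => fderiv ℝ (u t) x (EuclideanSpace.single i 1)) := fun t x =>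
  (space_deriv hu t x).differentiableAt.hasFDerivAt.hasLineDerivAt _

lemma time_TD {u : ℝ → Rn n → ℂ} (hu : ContDiff ℝ (⊤ : ℕ∞) fun p : ℝ × Rn n => u p.1 p.2) :
    TD u (fun t x => deriv (fun s => u s x) t) := fun t x =>
  (time_deriv hu t x).differentiableAt.hasDerivAt

lemma single_norm (i : Fin n) : ‖(EuclideanSpace.single i 1 : Rn n)‖ = 1 := by simp

lemma SchwartzLike.nice {u : ℝ → Rn n → ℂ}
    (hu : ContDiff ℝ (⊤ : ℕ∞) fun p : ℝ × Rn n => u p.1 p.2) (hs : SchwartzLike u) :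
    Nice u (fun t x => deriv (fun s => u s x) t)
      (fun i t x => fderiv ℝ (u t) x (EuclideanSpace.single i 1))
      (fun i t x => fderiv ℝ (fun y => deriv (fun s => u s y) t) x (EuclideanSpace.single i 1))
      (fun i j t x => fderiv ℝ (fun y => fderiv ℝ (u t) y (EuclideanSpace.single i 1)) x
        (EuclideanSpace.single j 1)) where
  r := ⟨hu.continuous, fun k T => by simpa using hs 0 k 0 T⟩
  rt := ⟨(time_smooth hu).continuous, fun k T => by simpa using hs 1 k 0 T⟩
  ri i := by
    refine ⟨(space_smooth hu _).continuous, fun k T => ?_⟩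
    obtain ⟨C, hC⟩ := hs 0 k 1 T
    refine ⟨C, fun t ht x => le_trans ?_ (hC t ht x)⟩
    rw [norm_iteratedFDeriv_one]
    simp only [iteratedDeriv_zero]
    gcongr
    exact (ContinuousLinearMap.le_opNorm _ _).trans (by rw [single_norm, mul_one])
  rti i := by
    refine ⟨(space_smooth (u := fun t x => deriv (fun s => u s x) t) (time_smooth hu) _).continuous, fun k T => ?_⟩
    obtain ⟨C, hC⟩ := hs 1 k 1 T
    refine ⟨C, fun t ht x => le_trans ?_ (hC t ht x)⟩
    rw [norm_iteratedFDeriv_one]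
    simp only [iteratedDeriv_one]
    gcongr
    exact (ContinuousLinearMap.le_opNorm _ _).trans (by rw [single_norm, mul_one])
  rij i j := by
    refine ⟨(space_smooth (u := fun t x => fderiv ℝ (u t) x (EuclideanSpace.single i 1))
      (space_smooth hu _) _).continuous, fun k T => ?_⟩
    obtain ⟨C, hC⟩ := hs 0 k 2 T
    refine ⟨C, fun t ht x => le_trans ?_ (hC t ht x)⟩
    simp only [iteratedDeriv_zero]
    gcongr
    have hut : ContDiff ℝ (⊤ : ℕ∞) (u t) :=
      hu.comp (contDiff_prodMk_right t)
    have hd : DifferentiableAt ℝ (fderiv ℝ (u t)) x :=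
      ((hut.fderiv_right (m := (⊤ : ℕ∞)) le_rfl).differentiable (by simp)) x
    rw [fderiv_clm_apply hd (differentiableAt_const _)]
    have h2 := ContinuousMultilinearMap.le_opNorm (iteratedFDeriv ℝ 2 (u t) x)
      ![EuclideanSpace.single j 1, EuclideanSpace.single i 1]
    rw [iteratedFDeriv_two_apply] at h2
    simpa using h2
  td := time_TD hu
  tdi i := by
    intro t x
    have h := time_TD (u := fun t x => fderiv ℝ (u t) x (EuclideanSpace.single i 1))
      (space_smooth hu (EuclideanSpace.single i 1)) t x
    have e1 := congrFun (time_eq (u := fun t x => fderiv ℝ (u t) x (EuclideanSpace.single i 1))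
      (space_smooth hu (EuclideanSpace.single i 1))) (t, x)
    have e2 := congrFun (space_eq (u := fun t x => deriv (fun s => u s x) t)
      (time_smooth hu) (EuclideanSpace.single i 1)) (t, x)
    rw [space_eq hu] at e1
    rw [time_eq hu, ← dir_comm hu] at e2
    have e3 := e1.trans e2.symm
    dsimp only at e3 h ⊢
    rw [← e3]
    exact h
  ld i := space_LD hu i
  ldt i := space_LD (u := fun t x => deriv (fun s => u s x) t) (time_smooth hu) i
  ldi i j := space_LD (u := fun t x => fderiv ℝ (u t) x (EuclideanSpace.single i 1))
    (space_smooth hu _) j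
  symm i j t x := by
    have hut : ContDiff ℝ (⊤ : ℕ∞) (u t) :=
      hu.comp (contDiff_prodMk_right t)
    exact dir_comm hut _ _ _

end extract

/-- Virial identity (κ = 1/2, mass resonance): the variance
`V(t) = ∫|x|²(|u|² + 2|v|²)` is twice differentiable with
`V''(t) = 2n E(u(0),v(0)) + 2(4−n) K(u(t),v(t))`. -/
theorem virial_identity {n : ℕ} (hn1 : 1 ≤ n) (hn6 : n ≤ 6)
    (u v : ℝ → Rn n → ℂ)
    (hu : ContDiff ℝ (⊤ : ℕ∞) fun p : ℝ × Rn n => u p.1 p.2)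
    (hv : ContDiff ℝ (⊤ : ℕ∞) fun p : ℝ × Rn n => v p.1 p.2)
    (hus : SchwartzLike u) (hvs : SchwartzLike v)
    (heq1 : ∀ (t : ℝ) (x : Rn n),
      Complex.I * deriv (fun s => u s x) t + lapC (u t) x
        = -2 * v t x * (starRingEnd ℂ) (u t x))
    (heq2 : ∀ (t : ℝ) (x : Rn n),
      Complex.I * deriv (fun s => v s x) t + (1 / 2 : ℂ) * lapC (v t) x
        = -(u t x ^ 2)) :
    ∃ W : ℝ → ℝ,
      (∀ t : ℝ, HasDerivAt
        (fun s => ∫ x : Rn n, ‖x‖ ^ 2 * (‖u s x‖ ^ 2 + 2 * ‖v s x‖ ^ 2)) (W t) t) ∧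
      (∀ t : ℝ, HasDerivAt W
        (2 * (n : ℝ) * EC (1 / 2) (u 0) (v 0)
          + 2 * (4 - (n : ℝ)) * KC (1 / 2) (u t) (v t)) t) := by
  have hU := hus.nice hu
  have hV := hvs.nice hv
  have nsq : ∀ z : ℂ, ‖z‖ ^ 2 = z.re * z.re + z.im * z.im := fun z => by
    rw [← Complex.normSq_apply, Complex.normSq_eq_norm_sq]
  have nsq' : ∀ z : ℂ, ‖z‖ ^ 2 = z.re ^ 2 + z.im ^ 2 := fun z => by rw [nsq]; ring
  have key := core (hU.clm Complex.reCLM) (hU.clm Complex.imCLM) (hV.clm Complex.reCLM)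
    (hV.clm Complex.imCLM)
    (fun t x => by
      have := congrArg Complex.im (heq1 t x)
      simp [lapC] at this ⊢
      linarith)
    (fun t x => by
      have := congrArg Complex.re (heq1 t x)
      simp [lapC] at this ⊢
      linarith)
    (fun t x => by
      have := congrArg Complex.im (heq2 t x)
      simp [lapC, pow_two] at this ⊢
      linarith)
    (fun t x => by
      have := congrArg Complex.re (heq2 t x)
      simp [lapC, pow_two] at this ⊢
      linarith)
  simp only [Complex.reCLM_apply, Complex.imCLM_apply] at key
  obtain ⟨⟨W, hW1, hW2⟩, hE⟩ := key
  have hKf : ∀ t x, gradSqC (u t) x + (1 / 2) * gradSqC (v t) x =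
      (((∑ i, (fderiv ℝ (u t) x (EuclideanSpace.single i 1)).re ^ 2)
        + ∑ i, (fderiv ℝ (u t) x (EuclideanSpace.single i 1)).im ^ 2)
      + (1 / 2) * ((∑ i, (fderiv ℝ (v t) x (EuclideanSpace.single i 1)).re ^ 2)
        + ∑ i, (fderiv ℝ (v t) x (EuclideanSpace.single i 1)).im ^ 2)) := by
    intro t x
    simp only [gradSqC, pderiv', nsq', Finset.sum_add_distrib]
  have hNf : ∀ t x, ((starRingEnd ℂ) (v t x) * u t x ^ 2).re =
      (v t x).re * ((u t x).re * (u t x).re - (u t x).im * (u t x).im)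
              + 2 * ((v t x).im * ((u t x).re * (u t x).im)) := by
    intro t x
    simp [pow_two]
    ring
  have rN : Rap (fun t x => (starRingEnd ℂ) (v t x) * u t x ^ 2) :=
    (hV.r.clm (Complex.conjCLE : ℂ →L[ℝ] ℂ)).mul hU.r.pow_two
  have rNr : Rap (fun t x => ((starRingEnd ℂ) (v t x) * u t x ^ 2).re) :=
    rN.clm Complex.reCLM
  have rg : ∀ {w wt : ℝ → Rn n → ℂ} {wi wti : Fin n → ℝ → Rn n → ℂ} {wij},
      Nice w wt wi wti wij → Rap (fun t x => ∑ i, ‖wi i t x‖ ^ 2) := by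
    intro w wt wi wti wij h
    simp only [nsq']
    exact Rap.sum _ fun i => ((h.ri i).clm Complex.reCLM).pow_two.add
      ((h.ri i).clm Complex.imCLM).pow_two
  have rK : Rap (fun t x => gradSqC (u t) x + (1 / 2) * gradSqC (v t) x) :=
    (rg hU).add ((rg hV).const_mul _)
  have hP : ∀ t, (∫ x : Rn n, (starRingEnd ℂ) (v t x) * u t x ^ 2).re
      = ∫ x : Rn n, ((starRingEnd ℂ) (v t x) * u t x ^ 2).re := fun t =>
    (Complex.reCLM.integral_comp_comm (rN.int t)).symm
  simp only [← hKf, ← hNf] at hW2 hE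
  have hEC : ∀ t, (∫ x : Rn n, (gradSqC (u t) x + (1 / 2) * gradSqC (v t) x
      - 2 * ((starRingEnd ℂ) (v t x) * u t x ^ 2).re)) = EC (1 / 2) (u t) (v t) := by
    intro t
    rw [integral_sub (rK.int t) ((rNr.int t).const_mul 2), integral_const_mul, EC, hP, KC]
  have hEc : ∀ t, EC (1 / 2) (u t) (v t) = EC (1 / 2) (u 0) (v 0) := by
    intro t
    rw [← hEC, ← hEC]
    exact is_const_of_deriv_eq_zero (fun s => (hE s).differentiableAt) (fun s => (hE s).deriv) t 0
  refine ⟨W, fun t => ?_, fun t => ?_⟩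
  · simp only [nsq (u _ _), nsq (v _ _)]
    exact hW1 t
  · convert hW2 t using 1
    rw [integral_sub ((rK.int t).const_mul 8) ((rNr.int t).const_mul (4 * n)),
      integral_const_mul, integral_const_mul, ← hEc t, EC, hP, KC]
    ring

end
end
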